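/- arXiv:1412.3025 — 2 statements merged into one kernel-verified Lean document; each statement's English description precedes it below -/
import Mathlib

section
/- Let (M,E,η) be a factorable monoid. Then the map μ : Ω_* → Ω_* defined from η is a noetherian, ℤ-compatible matching on the reduced inhomogeneous bar complex of M: (i) μ is a well-defined involution whose fixed points are exactly the essential cells, and it exchanges collapsible cells of height h with redundant cells of height h−1 (and vice versa); (ii) for every redundant cell x, the coefficient of x in d(μ(x)) equals ±1; (iii) every infinite chain x₁ ⊢ x₂ ⊢ x₃ ⊢ ⋯ of redundant cells is eventually constant. -/
/-- The word length of `m` with respect to the generating set `E`: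
the least `n` such that `m` is a product of `n` elements of `E`. -/
noncomputable def wordLength {M : Type*} [Monoid M] (E : Set M) (m : M) : ℕ :=
  sInf {n | ∃ l : List M, (∀ x ∈ l, x ∈ E) ∧ l.length = n ∧ l.prod = m}

/-- `E` is a generating set of the monoid `M`. -/
def IsGenSet {M : Type*} [Monoid M] (E : Set M) : Prop :=
  ∀ m : M, ∃ l : List M, (∀ x ∈ l, x ∈ E) ∧ l.prod = m

/-- The pair `(a, b)` is geodesic with respect to `E`. -/
noncomputable def Geodesic {M : Type*} [Monoid M] (E : Set M) (a b : M) : Prop :=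
  wordLength E (a * b) = wordLength E a + wordLength E b

/-- A factorization map `η = (η̄, η′)` on `(M, E)`. -/
noncomputable def IsFactorizationMap {M : Type*} [Monoid M] (E : Set M)
    (η : M → M × M) : Prop :=
  (∀ m, (η m).1 * (η m).2 = m) ∧
  (∀ m, wordLength E m = wordLength E (η m).1 + wordLength E (η m).2) ∧
  (∀ m, m ≠ 1 → (η m).2 ∈ E) ∧
  η 1 = (1, 1)

/-- The map `f₁ : M³ → M³` applying `η` to the product of the two right entries,
with triples written `(x₃, x₂, x₁)`. -/
def f1 {M : Type*} [Monoid M] (η : M → M × M) (p : M × M × M) : M × M × M :=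
  (p.1, η (p.2.1 * p.2.2))

/-- The map `f₂ : M³ → M³` applying `η` to the product of the two left entries. -/
def f2 {M : Type*} [Monoid M] (η : M → M × M) (p : M × M × M) : M × M × M :=
  ((η (p.1 * p.2.1)).1, (η (p.1 * p.2.1)).2, p.2.2)

/-- The sum of the word lengths of the entries of a triple. -/
noncomputable def tnorm {M : Type*} [Monoid M] (E : Set M) (p : M × M × M) : ℕ :=
  wordLength E p.1 + wordLength E p.2.1 + wordLength E p.2.2

/-- `η` is a factorability structure on `(M, E)`: it is a factorization map and the
three maps `f₁f₂f₁f₂`, `f₂f₁f₂`, `f₂f₁f₂f₁ : M³ → M³` are equal in the graded sense. -/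
noncomputable def IsFactorable {M : Type*} [Monoid M] (E : Set M) (η : M → M × M) : Prop :=
  IsFactorizationMap E η ∧
  ∀ p : M × M × M,
    (f1 η (f2 η (f1 η (f2 η p))) = f2 η (f1 η (f2 η p)) ∧
     f2 η (f1 η (f2 η p)) = f2 η (f1 η (f2 η (f1 η p)))) ∨
    (tnorm E (f1 η (f2 η (f1 η (f2 η p)))) < tnorm E p ∧
     tnorm E (f2 η (f1 η (f2 η p))) < tnorm E p ∧
     tnorm E (f2 η (f1 η (f2 η (f1 η p)))) < tnorm E p)

/-- `η` is a weak factorability structure on `(M, E)`. -/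
noncomputable def IsWeaklyFactorable {M : Type*} [Monoid M] (E : Set M)
    (η : M → M × M) : Prop :=
  IsFactorizationMap E η ∧
  ∀ x : M, ∀ t ∈ E,
    Geodesic E (η x).2 t →
    Geodesic E (η x).1 (η ((η x).2 * t)).1 →
    Geodesic E x t ∧
    (η (x * t)).2 = (η ((η x).2 * t)).2 ∧
    (η (x * t)).1 = (η x).1 * (η ((η x).2 * t)).1

/-- `η` satisfies the recognition principle. -/
def RecognitionPrinciple {M : Type*} [Monoid M] (E : Set M) (η : M → M × M) : Prop :=
  ∀ m : M, ∀ a ∈ E, (η (m * a) = (m, a) ↔ η ((η m).2 * a) = ((η m).2, a))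


attribute [local instance] Classical.propDecidable

/-- The `j`-th entry `m_j` (counted from the right, `1`-indexed) of a bar cell
`[m_n|…|m_1]` encoded as the list `[m_n, …, m_1]`. -/
def ent {M : Type*} [Monoid M] (l : List M) (j : ℕ) : M := l.getD (l.length - j) 1

/-- The `i`-th face `d_i` of the bar differential on a cell `[m_n|…|m_1]` (encoded as
`[m_n, …, m_1]`): `d_0` deletes `m_1`, `d_n` deletes `m_n`, and for `0 < i < n`, `d_i`
replaces the pair `(m_{i+1}, m_i)` by the product `m_{i+1}·m_i`. -/
def dPart {M : Type*} [Monoid M] (i : ℕ) (l : List M) : List M :=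
  if i = 0 then l.dropLast
  else if i = l.length then l.tail
  else (l.reverse.take (i - 1) ++
        [l.reverse.getD i 1 * l.reverse.getD (i - 1) 1] ++
        l.reverse.drop (i + 1)).reverse

/-- The differential of the reduced inhomogeneous bar complex applied to a cell:
`d = Σ_i (−1)^i d_i`, where a face is set to `0` whenever it contains an entry `1`. -/
noncomputable def barDiff {M : Type*} [Monoid M] (l : List M) : List M →₀ ℤ :=
  ∑ i ∈ Finset.range (l.length + 1),
    if (1 : M) ∈ dPart i l then 0 else Finsupp.single (dPart i l) ((-1) ^ i)

/-- A cell `[m_n|…|m_1]` is essential if all entries lie in `E` and all adjacent pairs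
`(m_{i+1}, m_i)` are unstable. -/
def EssCell {M : Type*} [Monoid M] (E : Set M) (η : M → M × M) (l : List M) : Prop :=
  (∀ a ∈ l, a ∈ E) ∧ l.Chain' (fun a b => η (a * b) ≠ (a, b))

/-- The height of a cell: the largest `h` such that `[m_h|…|m_1]` is essential. -/
noncomputable def height {M : Type*} [Monoid M] (E : Set M) (η : M → M × M)
    (l : List M) : ℕ :=
  sSup {h : ℕ | h ≤ l.length ∧ EssCell E η (l.drop (l.length - h))}

/-- A non-essential cell of height `h` is collapsible if `h ≥ 1` and the pair
`(m_{h+1}, m_h)` is stable. -/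
noncomputable def Collapsible {M : Type*} [Monoid M] (E : Set M) (η : M → M × M)
    (l : List M) : Prop :=
  height E η l < l.length ∧ 1 ≤ height E η l ∧
  η (ent l (height E η l + 1) * ent l (height E η l)) =
    (ent l (height E η l + 1), ent l (height E η l))

/-- A non-essential cell which is not collapsible is redundant. -/
noncomputable def Redundant {M : Type*} [Monoid M] (E : Set M) (η : M → M × M)
    (l : List M) : Prop :=
  height E η l < l.length ∧ ¬ Collapsible E η l

/-- The matching `μ` on the bar complex of a factorable monoid: it fixes essential
cells; a collapsible cell of height `h` is sent to the cell where `(m_{h+1}, m_h)` is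
replaced by `m_{h+1}·m_h`; a redundant cell of height `h` is sent to the cell where
`m_{h+1}` is replaced by the pair `(η̄(m_{h+1}), η′(m_{h+1}))`. -/
noncomputable def matchMu {M : Type*} [Monoid M] (E : Set M) (η : M → M × M)
    (l : List M) : List M :=
  if height E η l = l.length then l
  else if Collapsible E η l then dPart (height E η l) l
  else (l.reverse.take (height E η l) ++
        [(η (l.reverse.getD (height E η l) 1)).2,
         (η (l.reverse.getD (height E η l) 1)).1] ++
        l.reverse.drop (height E η l + 1)).reverse

section WordLength

variable {M : Type*} [Monoid M] {E : Set M}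

theorem exists_list_of_wordLength (hgen : IsGenSet E) (m : M) :
    ∃ l : List M, (∀ x ∈ l, x ∈ E) ∧ l.length = wordLength E m ∧ l.prod = m := by
  obtain ⟨l, hl, hm⟩ := hgen m
  exact Nat.sInf_mem (s := {n | ∃ l : List M, (∀ x ∈ l, x ∈ E) ∧ l.length = n ∧ l.prod = m})
    ⟨l.length, l, hl, rfl, hm⟩

theorem wordLength_prod_le {l : List M} (hl : ∀ x ∈ l, x ∈ E) :
    wordLength E l.prod ≤ l.length :=
  Nat.sInf_le ⟨l, hl, rfl, rfl⟩

theorem wordLength_one : wordLength E (1 : M) = 0 := by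
  simpa using wordLength_prod_le (E := E) (l := ([] : List M)) (by simp)

theorem wordLength_pos (hgen : IsGenSet E) {m : M} (hm : m ≠ 1) : 0 < wordLength E m := by
  obtain ⟨l, -, hlen, hprod⟩ := exists_list_of_wordLength hgen m
  rcases l with _ | ⟨a, l⟩
  · exact absurd hprod.symm (by simpa using hm)
  · simp at hlen
    omega

theorem wordLength_le_one {e : M} (he : e ∈ E) : wordLength E e ≤ 1 := by
  simpa using wordLength_prod_le (E := E) (l := [e]) (by simpa using he)

theorem wordLength_mul_le (hgen : IsGenSet E) (a b : M) :
    wordLength E (a * b) ≤ wordLength E a + wordLength E b := by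
  obtain ⟨l, hl, hlen, rfl⟩ := exists_list_of_wordLength hgen a
  obtain ⟨l', hl', hlen', rfl⟩ := exists_list_of_wordLength hgen b
  rw [← hlen, ← hlen', ← List.length_append, ← List.prod_append]
  refine wordLength_prod_le fun x hx => ?_
  rcases List.mem_append.1 hx with h | h
  exacts [hl x h, hl' x h]

/-- A product of geodesic non-unit factors is not a generator. -/
theorem mul_notMem_of_geodesic (hgen : IsGenSet E) {a b : M} (ha : a ≠ 1) (hb : b ≠ 1)
    (h : Geodesic E a b) : a * b ∉ E := fun hE => by
  have h₁ := wordLength_pos hgen ha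
  have h₂ := wordLength_pos hgen hb
  have h₃ := wordLength_le_one hE
  unfold Geodesic at h
  omega

end WordLength

section Factorable

variable {M : Type*} [Monoid M] {E : Set M} {η : M → M × M}

theorem IsFactorizationMap.geodesic_of_stable (hη : IsFactorizationMap E η) {a b : M}
    (h : η (a * b) = (a, b)) : Geodesic E a b := by
  have := hη.2.1 (a * b)
  rwa [h] at this

theorem IsFactorizationMap.fst_ne_one (hη : IsFactorizationMap E η) {m : M} (hm : m ≠ 1)
    (hE : m ∉ E) : (η m).1 ≠ 1 := fun h => by
  have h₁ := hη.1 m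
  rw [h, one_mul] at h₁
  exact hE (h₁ ▸ hη.2.2.1 m hm)

theorem IsFactorable.recognitionPrinciple (hfac : IsFactorable E η)
    (m a : M) : η (m * a) = (m, a) ↔ η ((η m).2 * a) = ((η m).2, a) := by
  obtain ⟨hη, hf⟩ := hfac
  have forward : ∀ u v : M, η (u * v) = (u, v) → η ((η u).2 * v) = ((η u).2, v) := by
    intro u v huv
    have hN := hη.geodesic_of_stable huv
    unfold Geodesic at hN
    have hNu := hη.2.1 u
    rcases hf (1, 1, u * v) with h | h
    · have := h.1
      simp only [f1, f2, hη.2.2.2, one_mul, mul_one, huv] at this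
      simpa [Prod.ext_iff] using this
    · have := h.2.1
      simp only [f1, f2, tnorm, hη.2.2.2, one_mul, mul_one, huv, wordLength_one] at this
      omega
  refine ⟨forward m a, fun h => ?_⟩
  have hNm := hη.2.1 m
  have hm := hη.1 m
  rcases hf (1, m, a) with h' | h'
  · have h₂ := h'.2
    have hu := hη.1 (η (m * a)).1
    have hs := forward (η (m * a)).1 (η (m * a)).2 (by rw [hη.1])
    simp only [f1, f2, one_mul, h, hη.1, hs, Prod.mk.injEq] at h₂
    obtain ⟨h₃, h₄, h₅⟩ := h₂
    refine Prod.ext ?_ h₅.symm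
    rw [← hu, ← h₃, ← h₄, hm]
  · have := h'.2.1
    simp only [f1, f2, one_mul, h, hη.1, tnorm, wordLength_one] at this
    omega

/-- If the left pair of a triple is stable, then applying the norm-preserving maps `f₁` and `f₂`
makes the right pair stable. -/
theorem IsFactorable.stable_of_stable (hfac : IsFactorable E η) {a b c : M}
    (hab : η (a * b) = (a, b)) (hbc : Geodesic E b c) (habc : Geodesic E a (η (b * c)).1) :
    η ((η (a * (η (b * c)).1)).2 * (η (b * c)).2) =
      ((η (a * (η (b * c)).1)).2, (η (b * c)).2) := by
  obtain ⟨hη, hf⟩ := hfac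
  rcases hf (a, b, c) with h | h
  · have := h.1
    simp only [f1, f2, hab, Prod.mk.injEq] at this
    exact this.2
  · have := h.2.1
    simp only [f1, f2, tnorm, hab] at this
    have h₁ := hη.2.1 (b * c)
    have h₂ := hη.2.1 (a * (η (b * c)).1)
    unfold Geodesic at hbc habc
    omega

end Factorable

section Chains

variable {M : Type*} [Monoid M] {E : Set M} {η : M → M × M}

/-- Between two equal values of the heights of a norm-preserving chain there is a larger one.
Here `Y t` lists the entries from the right at time `t`, and `k t` is the position at which
`η` was last applied. -/
theorem exists_larger_height_between (hfac : IsFactorable E η) {Y : ℕ → ℕ → M} {k : ℕ → ℕ}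
    (hstab : ∀ t, η (Y t (k t + 1) * Y t (k t)) = (Y t (k t + 1), Y t (k t)))
    (hunst : ∀ t i, k t = i + 1 → η (Y t (i + 1) * Y t i) ≠ (Y t (i + 1), Y t i))
    (happly : ∀ t, (Y (t + 1) (k (t + 1) + 1), Y (t + 1) (k (t + 1))) =
      η (Y t (k (t + 1) + 1) * Y t (k (t + 1))))
    (hrest : ∀ t i, i ≠ k (t + 1) → i ≠ k (t + 1) + 1 → Y (t + 1) i = Y t i)
    (hstep : ∀ t, k (t + 1) < k t ∨ k (t + 1) = k t + 1)
    (hgeo : ∀ t, Geodesic E (Y t (k (t + 1) + 1)) (Y t (k (t + 1))))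
    (j s t : ℕ) (hst : s < t) (hs : k s = j) (ht : k t = j) :
    ∃ r, s < r ∧ r < t ∧ j < k r := by
  induction j generalizing s t with
  | zero =>
    obtain ⟨q, rfl⟩ : ∃ q, t = q + 1 := ⟨t - 1, by omega⟩
    have h₁ := hstep q
    have hq : s ≠ q := by rintro rfl; omega
    exact ⟨q, by omega, by omega, by omega⟩
  | succ j ih =>
    induction hd : t - s using Nat.strong_induction_on generalizing s with
    | _ d ihd =>
    by_contra! hno
    have hlt : ∀ r, s < r → r < t → k r < j + 1 := by
      intro r h₁ h₂
      refine lt_of_le_of_ne (hno r h₁ h₂) fun h₃ => ?_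
      obtain ⟨r', h₄, h₅, h₆⟩ := ihd (t - r) (by omega) r h₂ h₃ rfl
      exact absurd (hno r' (by omega) h₅) (by omega)
    obtain ⟨q, rfl⟩ : ∃ q, t = q + 1 := ⟨t - 1, by omega⟩
    have hsq : s < q := by
      have h₁ := hstep q
      have hq : s ≠ q := by rintro rfl; omega
      omega
    have hkq : k q = j := by
      have h₁ := hlt q hsq (by omega)
      have h₂ := hstep q
      omega
    have hlt' : ∀ r, s < r → r < q → k r < j := by
      intro r h₁ h₂
      refine lt_of_le_of_ne (by have := hlt r h₁ (by omega); omega) fun h₃ => ?_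
      obtain ⟨r', h₄, h₅, h₆⟩ := ih r q h₂ h₃ hkq
      exact absurd (hlt r' (by omega) (by omega)) (by omega)
    have hsame : ∀ r, s + r < q →
        Y (s + r) (j + 1) = Y s (j + 1) ∧ Y (s + r) (j + 2) = Y s (j + 2) := by
      intro r
      induction r with
      | zero => simp
      | succ r ihr =>
        intro hr
        have h₁ := hlt' (s + (r + 1)) (by omega) hr
        obtain ⟨h₂, h₃⟩ := ihr (by omega)
        rw [← h₂, ← h₃]
        exact ⟨hrest (s + r) _ (by rw [add_assoc]; omega) (by rw [add_assoc]; omega),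
          hrest (s + r) _ (by rw [add_assoc]; omega) (by rw [add_assoc]; omega)⟩
    obtain ⟨r, rfl⟩ : ∃ r, q = s + r + 1 := ⟨q - s - 1, by omega⟩
    obtain ⟨e₁, e₂⟩ := hsame r (by omega)
    have h₁ : η (Y (s + r) (j + 2) * Y (s + r) (j + 1)) =
        (Y (s + r) (j + 2), Y (s + r) (j + 1)) := by
      have := hstab s
      rw [hs] at this
      rw [e₁, e₂]
      exact this
    have a₁ := happly (s + r)
    have g₁ := hgeo (s + r)
    have a₂ := happly (s + r + 1)
    have g₂ := hgeo (s + r + 1)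
    have u := hunst (s + r + 1 + 1) j ht
    have c₁ := hrest (s + r) (j + 2) (by omega) (by omega)
    have c₂ := hrest (s + r + 1) j (by omega) (by omega)
    rw [hkq] at a₁ g₁
    rw [ht] at a₂ g₂
    rw [Prod.ext_iff] at a₁ a₂
    obtain ⟨a₁₁, a₁₂⟩ := a₁
    obtain ⟨a₂₁, a₂₂⟩ := a₂
    simp only [add_assoc, Nat.reduceAdd] at *
    have := hfac.stable_of_stable h₁ g₁ (by rw [← a₁₁, ← c₁]; exact g₂)
    rw [← a₁₁, ← a₁₂, ← c₁, ← c₂, ← a₂₂] at this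
    exact u this

theorem not_bounded_of_larger_between {k : ℕ → ℕ}
    (hk : ∀ j s t, s < t → k s = j → k t = j → ∃ r, s < r ∧ r < t ∧ j < k r) (K : ℕ) :
    ¬ ∀ t, k t < K := by
  induction K generalizing k with
  | zero => exact fun h => absurd (h 0) (by omega)
  | succ K ih =>
    intro hK
    by_cases h : ∃ t, k t = K
    · obtain ⟨t, ht⟩ := h
      refine ih (k := fun n => k (t + 1 + n)) (fun j s s' hss hs hs' => ?_) fun n => ?_
      · obtain ⟨r, h₁, h₂, h₃⟩ := hk j _ _ (by omega) hs hs'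
        exact ⟨r - (t + 1), by omega, by omega, by
          rwa [show t + 1 + (r - (t + 1)) = r by omega]⟩
      · refine lt_of_le_of_ne (Nat.lt_succ_iff.1 (hK _)) fun h => ?_
        obtain ⟨r, -, -, h₃⟩ := hk K t _ (by omega) ht h
        exact absurd (hK r) (by omega)
    · push Not at h
      exact ih hk fun t => lt_of_le_of_ne (Nat.lt_succ_iff.1 (hK t)) (h t)

end Chains

section Coordinates

variable {M : Type*} [Monoid M] {E : Set M} {η : M → M × M}

/-- The entries of a cell counted from the right, starting at `0`, and continued by `1`. -/
def coord (l : List M) (i : ℕ) : M := l.reverse.getD i 1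

theorem coord_of_le {l : List M} {i : ℕ} (h : l.length ≤ i) : coord l i = 1 := by
  simp [coord, h]

theorem coord_eq_getElem {l : List M} {i : ℕ} (h : i < l.length) :
    coord l i = l[l.length - 1 - i] := by
  simp [coord, h]

theorem coord_mem {l : List M} {i : ℕ} (h : i < l.length) : coord l i ∈ l := by
  simp [coord_eq_getElem h]

theorem exists_coord_of_mem {l : List M} {a : M} (h : a ∈ l) :
    ∃ i < l.length, coord l i = a := by
  obtain ⟨i, hi, rfl⟩ := List.getElem_of_mem (List.mem_reverse.2 h)
  exact ⟨i, by simpa using hi, by rw [coord, List.getD_eq_getElem]⟩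

theorem one_notMem_iff_coord_ne_one {l : List M} :
    (1 : M) ∉ l ↔ ∀ i < l.length, coord l i ≠ 1 := by
  refine ⟨fun h i hi h' => h (h' ▸ coord_mem hi), fun h h' => ?_⟩
  obtain ⟨i, hi, hc⟩ := exists_coord_of_mem h'
  exact h i hi hc

theorem ext_coord {l l' : List M} (hlen : l.length = l'.length)
    (h : ∀ i, coord l i = coord l' i) : l = l' := by
  refine List.reverse_injective (List.ext_getElem (by simpa using hlen) fun i h₁ h₂ => ?_)
  have := h i
  rwa [coord, coord, List.getD_eq_getElem _ _ h₁, List.getD_eq_getElem _ _ h₂] at this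

theorem ent_succ {l : List M} {i : ℕ} (h : i < l.length) : ent l (i + 1) = coord l i := by
  rw [coord_eq_getElem h, ent, List.getD_eq_getElem _ _ (by omega)]
  congr 1
  omega

theorem length_dPart {l : List M} {i : ℕ} (h : i ≤ l.length) :
    (dPart i l).length = l.length - 1 := by
  unfold dPart
  split_ifs
  · simp
  · simp
  · simp
    omega

theorem coord_dPart_zero (l : List M) (i : ℕ) : coord (dPart 0 l) i = coord l (i + 1) := by
  simp only [coord, dPart, if_true, ← List.tail_reverse, List.getD_eq_getElem?_getD,
    List.getElem?_tail]

theorem coord_dPart_length {l : List M} {i : ℕ} (h : i + 1 < l.length) :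
    coord (dPart l.length l) i = coord l i := by
  rw [coord_eq_getElem (by rw [length_dPart le_rfl]; omega), coord_eq_getElem (by omega)]
  have : l ≠ [] := by rintro rfl; simp at h
  simp only [dPart, List.length_eq_zero_iff, this, if_false, if_true, List.getElem_tail,
    List.length_tail]
  congr 1
  omega

theorem coord_dPart_succ {l : List M} {p : ℕ} (h : p + 1 < l.length) (i : ℕ) :
    coord (dPart (p + 1) l) i =
      if i < p then coord l i else if i = p then coord l (p + 1) * coord l p
        else coord l (i + 1) := by
  have hp : p + 1 ≠ l.length := h.ne
  simp only [dPart, hp, coord, if_false, Nat.succ_ne_zero, List.reverse_reverse,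
    Nat.add_sub_cancel]
  split_ifs with h₁ h₂
  · rw [List.append_assoc, List.getD_append _ _ _ _ (by simp; omega)]
    simp [h₁]
  · subst h₂
    rw [List.append_assoc, List.getD_append_right _ _ _ _ (by simp)]
    have : min i l.length = i := by omega
    simp [this]
  · rw [List.getD_append_right _ _ _ _ (by simp; omega)]
    have : min p l.length = p := by omega
    simp only [List.length_append, List.length_take, List.length_reverse, this,
      List.length_singleton, List.getD_eq_getElem?_getD, List.getElem?_drop]
    congr 2
    omega

/-- The cell obtained from `l` by splitting the entry with coordinate `h` by means of `η`. -/
def splitAtCoord (η : M → M × M) (l : List M) (h : ℕ) : List M :=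
  (l.reverse.take h ++ [(η (l.reverse.getD h 1)).2, (η (l.reverse.getD h 1)).1] ++
    l.reverse.drop (h + 1)).reverse

theorem length_splitAtCoord {l : List M} {h : ℕ} (hh : h < l.length) :
    (splitAtCoord η l h).length = l.length + 1 := by
  simp [splitAtCoord]
  omega

theorem coord_splitAtCoord {l : List M} {h : ℕ} (hh : h < l.length) (i : ℕ) :
    coord (splitAtCoord η l h) i =
      if i < h then coord l i else if i = h then (η (coord l h)).2
        else if i = h + 1 then (η (coord l h)).1 else coord l (i - 1) := by
  simp only [splitAtCoord, coord, List.reverse_reverse]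
  have hm : min h l.length = h := by omega
  split_ifs with h₁ h₂ h₃
  · rw [List.append_assoc, List.getD_append _ _ _ _ (by simp; omega)]
    simp [h₁]
  · subst h₂
    rw [List.append_assoc, List.getD_append_right _ _ _ _ (by simp)]
    simp [hm]
  · subst h₃
    rw [List.append_assoc, List.getD_append_right _ _ _ _ (by simp)]
    simp [hm]
  · rw [List.getD_append_right _ _ _ _ (by simp; omega)]
    simp only [List.length_append, List.length_take, List.length_reverse, hm, List.length_cons,
      List.length_nil, List.getD_eq_getElem?_getD, List.getElem?_drop]
    congr 2
    omega

/-- The norm of a cell: the sum of the word lengths of its entries. -/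
noncomputable def cellNorm (E : Set M) (l : List M) : ℕ := (l.map (wordLength E)).sum

theorem cellNorm_reverse (l : List M) : cellNorm E l.reverse = cellNorm E l := by
  simp [cellNorm, List.sum_reverse]

theorem cellNorm_append (l l' : List M) : cellNorm E (l ++ l') = cellNorm E l + cellNorm E l' := by
  simp [cellNorm]

theorem cellNorm_split {l : List M} {h : ℕ} (hh : h < l.length) :
    cellNorm E l = cellNorm E (l.reverse.take h) + wordLength E (coord l h) +
      cellNorm E (l.reverse.drop (h + 1)) := by
  conv_lhs => rw [← cellNorm_reverse, ← List.take_append_drop h l.reverse,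
    List.drop_eq_getElem_cons (by simpa using hh), cellNorm_append]
  have : l.reverse[h]'(by simpa using hh) = coord l h := by
    rw [coord, List.getD_eq_getElem]
  rw [this, add_assoc]
  simp [cellNorm]

theorem cellNorm_splitAtCoord (hη : IsFactorizationMap E η) {l : List M} {h : ℕ}
    (hh : h < l.length) : cellNorm E (splitAtCoord η l h) = cellNorm E l := by
  rw [cellNorm_split hh, splitAtCoord, cellNorm_reverse, cellNorm_append, cellNorm_append,
    hη.2.1 (coord l h)]
  simp [cellNorm, coord, add_comm, add_left_comm]

theorem cellNorm_dPart_succ {l : List M} {p : ℕ} (h : p + 1 < l.length) :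
    cellNorm E (dPart (p + 1) l) + wordLength E (coord l (p + 1)) + wordLength E (coord l p) =
      cellNorm E l + wordLength E (coord l (p + 1) * coord l p) := by
  have hp : p + 1 ≠ l.length := h.ne
  rw [cellNorm_split h, List.take_succ_eq_append_getElem (by simp; omega), cellNorm_append]
  have : l.reverse[p]'(by simp; omega) = coord l p := by
    rw [coord, List.getD_eq_getElem]
  rw [this]
  simp only [dPart, hp, if_false, Nat.succ_ne_zero, cellNorm_reverse, cellNorm_append,
    Nat.add_sub_cancel]
  simp [cellNorm, coord]
  omega

theorem cellNorm_dPart_zero {l : List M} (h : 0 < l.length) :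
    cellNorm E (dPart 0 l) + wordLength E (coord l 0) = cellNorm E l := by
  rw [cellNorm_split h]
  simp only [dPart, if_true, List.take_zero, zero_add, List.drop_one, List.tail_reverse,
    cellNorm_reverse]
  simp [cellNorm, add_comm]

theorem cellNorm_dPart_length {l : List M} (h : 0 < l.length) :
    cellNorm E (dPart l.length l) + wordLength E (coord l (l.length - 1)) = cellNorm E l := by
  obtain ⟨a, l, rfl⟩ := List.exists_cons_of_length_pos h
  rw [coord_eq_getElem (by simp)]
  simp [dPart, cellNorm, add_comm]

end Coordinates

section Matching

variable {M : Type*} [Monoid M] {E : Set M} {η : M → M × M}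

/-- The last `h` entries of the cell with coordinates `c` form an essential cell. -/
def EssUpTo (E : Set M) (η : M → M × M) (c : ℕ → M) (h : ℕ) : Prop :=
  (∀ i < h, c i ∈ E) ∧ ∀ i, i + 1 < h → η (c (i + 1) * c i) ≠ (c (i + 1), c i)

theorem EssUpTo.mono {c : ℕ → M} {h h' : ℕ} (hc : EssUpTo E η c h) (hh : h' ≤ h) :
    EssUpTo E η c h' :=
  ⟨fun i hi => hc.1 i (by omega), fun i hi => hc.2 i (by omega)⟩

theorem EssUpTo.congr {c c' : ℕ → M} {h : ℕ} (hc : EssUpTo E η c h)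
    (hcc : ∀ i < h, c' i = c i) : EssUpTo E η c' h := by
  refine ⟨fun i hi => hcc i hi ▸ hc.1 i hi, fun i hi => ?_⟩
  rw [hcc i (by omega), hcc (i + 1) hi]
  exact hc.2 i hi

theorem EssUpTo.succ {c : ℕ → M} {h : ℕ} (hc : EssUpTo E η c h) (hE : c h ∈ E)
    (hu : ∀ j, h = j + 1 → η (c (j + 1) * c j) ≠ (c (j + 1), c j)) :
    EssUpTo E η c (h + 1) := by
  refine ⟨fun i hi => ?_, fun i hi => ?_⟩
  · rcases Nat.lt_succ_iff_lt_or_eq.1 hi with h' | rfl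
    exacts [hc.1 i h', hE]
  · rcases Nat.lt_succ_iff_lt_or_eq.1 hi with h' | h'
    exacts [hc.2 i h', hu i h'.symm]

theorem EssUpTo.le_length (h1 : (1 : M) ∉ E) {l : List M} {h : ℕ}
    (hc : EssUpTo E η (coord l) h) : h ≤ l.length := by
  by_contra! hlt
  exact h1 (coord_of_le (le_refl l.length) ▸ hc.1 l.length hlt)

theorem essCell_iff {l : List M} : EssCell E η l ↔ EssUpTo E η (coord l) l.length := by
  refine and_congr ⟨fun h i hi => h _ (coord_mem hi), fun h a ha => ?_⟩ ?_
  · obtain ⟨i, hi, rfl⟩ := exists_coord_of_mem ha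
    exact h i hi
  · change List.IsChain _ l ↔ _
    rw [List.isChain_iff_getElem]
    refine ⟨fun h i hi => ?_, fun h i hi => ?_⟩
    · have := h (l.length - 1 - (i + 1)) (by omega)
      rw [coord_eq_getElem hi, coord_eq_getElem (by omega : i < l.length)]
      convert this using 4 <;> omega
    · have := h (l.length - 1 - (i + 1)) (by omega)
      rw [coord_eq_getElem (by omega), coord_eq_getElem (by omega)] at this
      convert this using 4 <;> omega

theorem coord_drop {l : List M} {h i : ℕ} (hh : h ≤ l.length) (hi : i < h) :
    coord (l.drop (l.length - h)) i = coord l i := by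
  rw [coord_eq_getElem (by simp; omega), coord_eq_getElem (by omega)]
  simp only [List.length_drop, List.getElem_drop]
  congr 1
  omega

theorem essUpTo_coord_iff (h1 : (1 : M) ∉ E) {l : List M} {h : ℕ} :
    EssUpTo E η (coord l) h ↔ h ≤ l.length ∧ EssCell E η (l.drop (l.length - h)) := by
  have hlen (hh : h ≤ l.length) : (l.drop (l.length - h)).length = h := by simp; omega
  refine ⟨fun hc => ?_, fun ⟨hh, hc⟩ => ?_⟩
  · have hh := hc.le_length h1
    rw [essCell_iff, hlen hh]
    exact ⟨hh, hc.congr fun i hi => coord_drop hh hi⟩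
  · rw [essCell_iff, hlen hh] at hc
    exact hc.congr fun i hi => (coord_drop hh hi).symm

theorem le_height_iff (h1 : (1 : M) ∉ E) {l : List M} {h : ℕ} :
    h ≤ height E η l ↔ EssUpTo E η (coord l) h := by
  have hset : {h : ℕ | h ≤ l.length ∧ EssCell E η (l.drop (l.length - h))} =
      {h | EssUpTo E η (coord l) h} := by
    ext h
    exact (essUpTo_coord_iff h1).symm
  have hbdd : BddAbove {h | EssUpTo E η (coord l) h} :=
    ⟨l.length, fun h hc => EssUpTo.le_length h1 hc⟩
  rw [height, hset]
  refine ⟨fun hh => ?_, fun hc => le_csSup hbdd hc⟩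
  refine EssUpTo.mono (Nat.sSup_mem ⟨0, ?_⟩ hbdd) hh
  exact ⟨fun i hi => absurd hi (by omega), fun i hi => absurd hi (by omega)⟩

theorem essUpTo_height (h1 : (1 : M) ∉ E) (l : List M) :
    EssUpTo E η (coord l) (height E η l) :=
  (le_height_iff h1).1 le_rfl

theorem height_eq (h1 : (1 : M) ∉ E) {l : List M} {h : ℕ} (hc : EssUpTo E η (coord l) h)
    (hn : ¬ EssUpTo E η (coord l) (h + 1)) : height E η l = h := by
  refine le_antisymm ?_ ((le_height_iff h1).2 hc)
  by_contra! hlt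
  exact hn ((le_height_iff h1).1 hlt)

theorem height_le_length (h1 : (1 : M) ∉ E) (l : List M) : height E η l ≤ l.length :=
  (essUpTo_height h1 l).le_length h1

theorem essCell_iff_height_eq (h1 : (1 : M) ∉ E) {l : List M} :
    EssCell E η l ↔ height E η l = l.length := by
  rw [essCell_iff, ← le_height_iff h1]
  exact ⟨fun h => (height_le_length h1 l).antisymm h, fun h => h.ge⟩

theorem collapsible_iff {l : List M} :
    Collapsible E η l ↔ ∃ p, height E η l = p + 1 ∧ p + 1 < l.length ∧
      η (coord l (p + 1) * coord l p) = (coord l (p + 1), coord l p) := by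
  unfold Collapsible
  constructor
  · rintro ⟨h₁, h₂, h₃⟩
    obtain ⟨p, hp⟩ : ∃ p, height E η l = p + 1 := ⟨height E η l - 1, by omega⟩
    rw [hp] at h₁ h₃
    rw [ent_succ h₁, ent_succ (by omega)] at h₃
    exact ⟨p, hp, h₁, h₃⟩
  · rintro ⟨p, hp, h₁, h₃⟩
    rw [hp, ent_succ h₁, ent_succ (by omega)]
    exact ⟨h₁, by omega, h₃⟩

theorem Redundant.unstable {l : List M} (hl : Redundant E η l) {j : ℕ}
    (hj : height E η l = j + 1) :
    η (coord l (j + 1) * coord l j) ≠ (coord l (j + 1), coord l j) :=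
  fun h => hl.2 (collapsible_iff.2 ⟨j, hj, hj ▸ hl.1, h⟩)

theorem Redundant.coord_height_notMem (h1 : (1 : M) ∉ E) {l : List M} (hl : Redundant E η l) :
    coord l (height E η l) ∉ E := fun hE => by
  have := (le_height_iff h1).2 ((essUpTo_height h1 l).succ hE fun j hj => hl.unstable hj)
  omega

theorem height_eq_of_notMem (h1 : (1 : M) ∉ E) {l : List M} {h : ℕ}
    (hc : EssUpTo E η (coord l) h) (hE : coord l h ∉ E) : height E η l = h :=
  height_eq h1 hc fun hc' => hE (hc'.1 h (by omega))

theorem collapsible_of_stable (h1 : (1 : M) ∉ E) {l : List M} {p : ℕ} (hp : p + 1 < l.length)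
    (hc : EssUpTo E η (coord l) (p + 1))
    (hs : η (coord l (p + 1) * coord l p) = (coord l (p + 1), coord l p)) :
    Collapsible E η l ∧ height E η l = p + 1 := by
  have hh := height_eq h1 hc fun hc' => hc'.2 p (by omega) hs
  exact ⟨collapsible_iff.2 ⟨p, hh, hp, hs⟩, hh⟩

theorem matchMu_of_redundant {l : List M} (hl : Redundant E η l) :
    matchMu E η l = splitAtCoord η l (height E η l) := by
  rw [matchMu, if_neg hl.1.ne, if_neg hl.2, splitAtCoord]

theorem matchMu_of_collapsible {l : List M} (hl : Collapsible E η l) :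
    matchMu E η l = dPart (height E η l) l := by
  rw [matchMu, if_neg hl.1.ne, if_pos hl]

theorem matchMu_of_essCell (h1 : (1 : M) ∉ E) {l : List M} (hl : EssCell E η l) :
    matchMu E η l = l := by
  rw [matchMu, if_pos ((essCell_iff_height_eq h1).1 hl)]

theorem essCell_or_collapsible_or_redundant (h1 : (1 : M) ∉ E) (l : List M) :
    EssCell E η l ∨ Collapsible E η l ∨ Redundant E η l := by
  rcases (height_le_length (η := η) h1 l).eq_or_lt with h | h
  · exact Or.inl ((essCell_iff_height_eq h1).2 h)
  · by_cases hc : Collapsible E η l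
    exacts [Or.inr (Or.inl hc), Or.inr (Or.inr ⟨h, hc⟩)]

theorem Redundant.length_matchMu {l : List M} (hl : Redundant E η l) :
    (matchMu E η l).length = l.length + 1 := by
  rw [matchMu_of_redundant hl, length_splitAtCoord hl.1]

theorem Collapsible.length_matchMu {l : List M} (hl : Collapsible E η l) :
    (matchMu E η l).length + 1 = l.length := by
  rw [matchMu_of_collapsible hl, length_dPart hl.1.le]
  have := hl.1
  omega

theorem Redundant.coord_matchMu {l : List M} (hl : Redundant E η l) (i : ℕ) :
    coord (matchMu E η l) i =
      if i < height E η l then coord l i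
      else if i = height E η l then (η (coord l (height E η l))).2
      else if i = height E η l + 1 then (η (coord l (height E η l))).1
      else coord l (i - 1) := by
  rw [matchMu_of_redundant hl, coord_splitAtCoord hl.1]

theorem Redundant.coord_matchMu_height {l : List M} (hl : Redundant E η l) :
    coord (matchMu E η l) (height E η l) = (η (coord l (height E η l))).2 := by
  simp [hl.coord_matchMu]

theorem Redundant.coord_matchMu_height_succ {l : List M} (hl : Redundant E η l) :
    coord (matchMu E η l) (height E η l + 1) = (η (coord l (height E η l))).1 := by
  simp [hl.coord_matchMu]

theorem Redundant.coord_matchMu_of_lt {l : List M} (hl : Redundant E η l) {i : ℕ}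
    (hi : i < height E η l) : coord (matchMu E η l) i = coord l i := by
  simp [hl.coord_matchMu, hi]

theorem Redundant.coord_matchMu_of_gt {l : List M} (hl : Redundant E η l) {i : ℕ}
    (hi : height E η l < i) : coord (matchMu E η l) (i + 1) = coord l i := by
  rw [hl.coord_matchMu, if_neg (by omega), if_neg (by omega), if_neg (by omega),
    Nat.add_sub_cancel]

theorem Redundant.stable_matchMu (hη : IsFactorizationMap E η) {l : List M}
    (hl : Redundant E η l) :
    η (coord (matchMu E η l) (height E η l + 1) * coord (matchMu E η l) (height E η l)) =
      (coord (matchMu E η l) (height E η l + 1), coord (matchMu E η l) (height E η l)) := by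
  rw [hl.coord_matchMu_height, hl.coord_matchMu_height_succ, hη.1]

theorem Redundant.coord_height_ne_one {l : List M} (hl : Redundant E η l) (h : (1 : M) ∉ l) :
    coord l (height E η l) ≠ 1 :=
  one_notMem_iff_coord_ne_one.1 h _ hl.1

theorem Redundant.essUpTo_matchMu (h1 : (1 : M) ∉ E) (hfac : IsFactorable E η) {l : List M}
    (hl : Redundant E η l) (h : (1 : M) ∉ l) :
    EssUpTo E η (coord (matchMu E η l)) (height E η l + 1) := by
  refine EssUpTo.succ ((essUpTo_height h1 l).congr fun i hi => hl.coord_matchMu_of_lt hi) ?_ ?_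
  · rw [hl.coord_matchMu_height]
    exact hfac.1.2.2.1 _ (hl.coord_height_ne_one h)
  · intro j hj
    have hu := hl.unstable hj
    rw [Ne, hfac.recognitionPrinciple] at hu
    rwa [← hj, hl.coord_matchMu_height, hl.coord_matchMu_of_lt (by omega), hj]

theorem Redundant.collapsible_matchMu (h1 : (1 : M) ∉ E) (hfac : IsFactorable E η) {l : List M}
    (hl : Redundant E η l) (h : (1 : M) ∉ l) :
    Collapsible E η (matchMu E η l) ∧ height E η (matchMu E η l) = height E η l + 1 :=
  collapsible_of_stable h1 (by rw [hl.length_matchMu]; exact Nat.succ_lt_succ hl.1)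
    (hl.essUpTo_matchMu h1 hfac h) (hl.stable_matchMu hfac.1)

theorem Redundant.one_notMem_matchMu (h1 : (1 : M) ∉ E) (hη : IsFactorizationMap E η)
    {l : List M} (hl : Redundant E η l) (h : (1 : M) ∉ l) : (1 : M) ∉ matchMu E η l := by
  rw [one_notMem_iff_coord_ne_one, hl.length_matchMu]
  intro i hi
  have hne := one_notMem_iff_coord_ne_one.1 h
  have h₀ := hl.1
  rw [hl.coord_matchMu]
  split_ifs
  · exact hne i (by omega)
  · exact fun h' => h1 (h' ▸ hη.2.2.1 _ (hl.coord_height_ne_one h))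
  · exact hη.fst_ne_one (hl.coord_height_ne_one h) (hl.coord_height_notMem h1)
  · exact hne _ (by omega)

theorem Redundant.dPart_matchMu (hη : IsFactorizationMap E η) {l : List M}
    (hl : Redundant E η l) : dPart (height E η l + 1) (matchMu E η l) = l := by
  have h₀ := hl.1
  have hlen := hl.length_matchMu
  refine ext_coord (by rw [length_dPart (by omega)]; omega) fun i => ?_
  rw [coord_dPart_succ (by omega)]
  split_ifs with h₁ h₂
  · exact hl.coord_matchMu_of_lt h₁
  · rw [hl.coord_matchMu_height, hl.coord_matchMu_height_succ, hη.1, h₂]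
  · exact hl.coord_matchMu_of_gt (by omega)

theorem Collapsible.one_notMem_matchMu (hgen : IsGenSet E) (hη : IsFactorizationMap E η)
    {l : List M} (hl : Collapsible E η l) (h : (1 : M) ∉ l) : (1 : M) ∉ matchMu E η l := by
  obtain ⟨p, hp, hlt, hs⟩ := collapsible_iff.1 hl
  have hne := one_notMem_iff_coord_ne_one.1 h
  rw [matchMu_of_collapsible hl, hp, one_notMem_iff_coord_ne_one, length_dPart hlt.le]
  intro i hi
  rw [coord_dPart_succ hlt]
  split_ifs
  · exact hne i (by omega)
  · intro h'
    have hg := hη.geodesic_of_stable hs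
    have hpos := wordLength_pos hgen (hne p (by omega))
    rw [Geodesic, h', wordLength_one] at hg
    omega
  · exact hne _ (by omega)

theorem Collapsible.redundant_matchMu (h1 : (1 : M) ∉ E) (hgen : IsGenSet E)
    (hfac : IsFactorable E η) {l : List M} (hl : Collapsible E η l) (h : (1 : M) ∉ l) :
    Redundant E η (matchMu E η l) ∧ height E η (matchMu E η l) + 1 = height E η l := by
  obtain ⟨p, hp, hlt, hs⟩ := collapsible_iff.1 hl
  have hne := one_notMem_iff_coord_ne_one.1 h
  have hess := essUpTo_height (η := η) h1 l
  have hlen := hl.length_matchMu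
  rw [hp] at hess ⊢
  have hcoord := coord_dPart_succ hlt
  rw [matchMu_of_collapsible hl, hp] at hlen ⊢
  have hcp : coord (dPart (p + 1) l) p = coord l (p + 1) * coord l p := by simp [hcoord]
  have hclt : ∀ i < p, coord (dPart (p + 1) l) i = coord l i := fun i hi => by simp [hcoord, hi]
  have hh : height E η (dPart (p + 1) l) = p := by
    refine height_eq_of_notMem h1 ((hess.mono (by omega)).congr hclt) ?_
    rw [hcp]
    exact mul_notMem_of_geodesic hgen (hne _ hlt) (hne _ (by omega))
      (hfac.1.geodesic_of_stable hs)
  refine ⟨⟨by omega, fun hcol => ?_⟩, by rw [hh]⟩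
  obtain ⟨j, hj, -, hs'⟩ := collapsible_iff.1 hcol
  obtain rfl : p = j + 1 := by omega
  rw [hcp, hclt j (by omega), hfac.recognitionPrinciple, hs] at hs'
  exact hess.2 j (by omega) hs'

theorem Collapsible.matchMu_matchMu (h1 : (1 : M) ∉ E) (hgen : IsGenSet E)
    (hfac : IsFactorable E η) {l : List M} (hl : Collapsible E η l) (h : (1 : M) ∉ l) :
    matchMu E η (matchMu E η l) = l := by
  obtain ⟨hr, hh⟩ := hl.redundant_matchMu h1 hgen hfac h
  obtain ⟨p, hp, hlt, hs⟩ := collapsible_iff.1 hl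
  have hcoord := coord_dPart_succ hlt
  have hμ := matchMu_of_collapsible hl
  have hh' : height E η (matchMu E η l) = p := by omega
  rw [hp] at hμ
  refine ext_coord (by rw [hr.length_matchMu, hl.length_matchMu]) fun i => ?_
  rw [hr.coord_matchMu, hh', hμ]
  simp only [hcoord, lt_irrefl, if_false, if_true, hs]
  split_ifs <;> first | rfl | (congr 1; omega)

theorem matchMu_matchMu (h1 : (1 : M) ∉ E) (hgen : IsGenSet E) (hfac : IsFactorable E η)
    {l : List M} (h : (1 : M) ∉ l) :
    (1 : M) ∉ matchMu E η l ∧ matchMu E η (matchMu E η l) = l := by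
  rcases essCell_or_collapsible_or_redundant (η := η) h1 l with hl | hl | hl
  · rw [matchMu_of_essCell h1 hl, matchMu_of_essCell h1 hl]
    exact ⟨h, rfl⟩
  · exact ⟨hl.one_notMem_matchMu hgen hfac.1 h, hl.matchMu_matchMu h1 hgen hfac h⟩
  · obtain ⟨hc, hh⟩ := hl.collapsible_matchMu h1 hfac h
    refine ⟨hl.one_notMem_matchMu h1 hfac.1 h, ?_⟩
    rw [matchMu_of_collapsible hc, hh, hl.dPart_matchMu hfac.1]

theorem matchMu_eq_self_iff (h1 : (1 : M) ∉ E) {l : List M} :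
    matchMu E η l = l ↔ EssCell E η l := by
  refine ⟨fun h => ?_, matchMu_of_essCell h1⟩
  rcases essCell_or_collapsible_or_redundant (η := η) h1 l with hl | hl | hl
  · exact hl
  · have := hl.length_matchMu
    rw [h] at this
    omega
  · have := hl.length_matchMu
    rw [h] at this
    omega

theorem Redundant.dPart_matchMu_ne (h1 : (1 : M) ∉ E) (hgen : IsGenSet E)
    (hη : IsFactorizationMap E η) {l : List M} (hl : Redundant E η l) (h : (1 : M) ∉ l) {i : ℕ}
    (hi : i ≤ l.length + 1) (hne : i ≠ height E η l + 1) :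
    dPart i (matchMu E η l) ≠ l := by
  intro heq
  have h₀ := hl.1
  have hlen := hl.length_matchMu
  have hone := hl.coord_height_ne_one h
  have hE := hl.coord_height_notMem h1
  have hmem := hη.2.2.1 _ hone
  have hprod := hη.1 (coord l (height E η l))
  have hN := hη.2.1 (coord l (height E η l))
  have hpos := wordLength_pos hgen fun h' : (η (coord l (height E η l))).2 = 1 => h1 (h' ▸ hmem)
  have key := congrArg (fun z => coord z (height E η l)) heq
  rcases i with _ | p
  · rw [coord_dPart_zero, hl.coord_matchMu_height_succ] at key
    rw [key] at hN
    omega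
  · rcases hi.eq_or_lt with hi | hi
    · rw [hi, ← hlen, coord_dPart_length (by omega), hl.coord_matchMu_height] at key
      exact hE (key ▸ hmem)
    · rw [coord_dPart_succ (by omega), hl.coord_matchMu_height, hl.coord_matchMu_height_succ] at key
      split_ifs at key with h₂ h₃
      · exact hE (key ▸ hmem)
      · omega
      · rw [key] at hN
        omega

theorem Redundant.barDiff_matchMu (h1 : (1 : M) ∉ E) (hgen : IsGenSet E)
    (hη : IsFactorizationMap E η) {l : List M} (hl : Redundant E η l) (h : (1 : M) ∉ l) :
    barDiff (matchMu E η l) l = (-1) ^ (height E η l + 1) := by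
  have h₀ := hl.1
  rw [barDiff, Finsupp.finsetSum_apply, Finset.sum_eq_single (height E η l + 1)]
  · rw [hl.dPart_matchMu hη, if_neg h, Finsupp.single_eq_same]
  · intro i hi hne
    rw [Finset.mem_range, hl.length_matchMu] at hi
    split_ifs
    · rfl
    · exact Finsupp.single_eq_of_ne (hl.dPart_matchMu_ne h1 hgen hη h (by omega) hne).symm
  · intro hi
    rw [Finset.mem_range, hl.length_matchMu] at hi
    omega

end Matching

section Noetherian

variable {M : Type*} [Monoid M] {E : Set M} {η : M → M × M}

theorem exists_dPart_of_barDiff_ne_zero {l z : List M} (h : barDiff l z ≠ 0) :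
    ∃ i ≤ l.length, dPart i l = z := by
  rw [barDiff, Finsupp.finsetSum_apply] at h
  obtain ⟨i, hi, hne⟩ := Finset.exists_ne_zero_of_sum_ne_zero h
  refine ⟨i, Nat.lt_succ_iff.1 (Finset.mem_range.1 hi), ?_⟩
  by_contra hz
  refine hne ?_
  split_ifs
  · rfl
  · exact Finsupp.single_eq_of_ne (Ne.symm hz)

theorem cellNorm_dPart_le (hgen : IsGenSet E) {l : List M} {i : ℕ} (hl : 0 < l.length)
    (hi : i ≤ l.length) : cellNorm E (dPart i l) ≤ cellNorm E l := by
  rcases i with _ | p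
  · exact Nat.le.intro (cellNorm_dPart_zero hl)
  · rcases hi.eq_or_lt with hi | hi
    · rw [hi]
      exact Nat.le.intro (cellNorm_dPart_length hl)
    · have h₁ := cellNorm_dPart_succ (E := E) hi
      have h₂ := wordLength_mul_le hgen (coord l (p + 1)) (coord l p)
      omega

theorem exists_geodesic_of_cellNorm_dPart_eq (hgen : IsGenSet E) {l : List M} {i : ℕ}
    (h : (1 : M) ∉ l) (hl : 0 < l.length) (hi : i ≤ l.length)
    (hN : cellNorm E (dPart i l) = cellNorm E l) :
    ∃ p, i = p + 1 ∧ p + 1 < l.length ∧ Geodesic E (coord l (p + 1)) (coord l p) := by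
  have hne := one_notMem_iff_coord_ne_one.1 h
  rcases i with _ | p
  · have h₁ := cellNorm_dPart_zero (E := E) hl
    have h₂ := wordLength_pos hgen (hne 0 hl)
    omega
  · rcases hi.eq_or_lt with hi | hi
    · have h₁ := cellNorm_dPart_length (E := E) hl
      have h₂ := wordLength_pos hgen (hne (l.length - 1) (by omega))
      rw [hi] at hN
      omega
    · have h₁ := cellNorm_dPart_succ (E := E) hi
      exact ⟨p, rfl, hi, by unfold Geodesic; omega⟩

theorem Redundant.cellNorm_matchMu (hη : IsFactorizationMap E η) {l : List M}
    (hl : Redundant E η l) : cellNorm E (matchMu E η l) = cellNorm E l := by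
  rw [matchMu_of_redundant hl, cellNorm_splitAtCoord hη hl.1]

theorem Redundant.cellNorm_le_of_barDiff_ne_zero (hgen : IsGenSet E)
    (hη : IsFactorizationMap E η) {x z : List M} (hx : Redundant E η x)
    (hxz : barDiff (matchMu E η x) z ≠ 0) : cellNorm E z ≤ cellNorm E x := by
  obtain ⟨i, hi, rfl⟩ := exists_dPart_of_barDiff_ne_zero hxz
  rw [← hx.cellNorm_matchMu hη]
  exact cellNorm_dPart_le hgen (by rw [hx.length_matchMu]; omega) hi

theorem Redundant.length_eq_of_barDiff_ne_zero {x z : List M} (hx : Redundant E η x)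
    (hxz : barDiff (matchMu E η x) z ≠ 0) : z.length = x.length := by
  obtain ⟨i, hi, rfl⟩ := exists_dPart_of_barDiff_ne_zero hxz
  rw [length_dPart hi, hx.length_matchMu, Nat.add_sub_cancel]

/-- A norm-preserving step `x ⊢ z` between distinct redundant cells applies `η` to the entries of
`μ(x)` with coordinates `k + 1` and `k`, where `k` is the height of `z`. -/
theorem Redundant.step_of_cellNorm_eq (h1 : (1 : M) ∉ E) (hgen : IsGenSet E)
    (hfac : IsFactorable E η) {x z : List M} (hx : Redundant E η x) (h : (1 : M) ∉ x)
    (hz : Redundant E η z) (hxz : barDiff (matchMu E η x) z ≠ 0) (hne : z ≠ x)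
    (hN : cellNorm E z = cellNorm E x) :
    (height E η z < height E η x ∨ height E η z = height E η x + 1) ∧
    Geodesic E (coord (matchMu E η x) (height E η z + 1))
      (coord (matchMu E η x) (height E η z)) ∧
    (coord (matchMu E η z) (height E η z + 1), coord (matchMu E η z) (height E η z)) =
      η (coord (matchMu E η x) (height E η z + 1) * coord (matchMu E η x) (height E η z)) ∧
    ∀ i, i ≠ height E η z → i ≠ height E η z + 1 →
      coord (matchMu E η z) i = coord (matchMu E η x) i := by
  have hlen := hx.length_matchMu
  have h₀ := hx.1
  have hμ := hx.one_notMem_matchMu h1 hfac.1 h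
  have hμne := one_notMem_iff_coord_ne_one.1 hμ
  obtain ⟨i, hi, rfl⟩ := exists_dPart_of_barDiff_ne_zero hxz
  obtain ⟨p, rfl, hp, hgeo⟩ := exists_geodesic_of_cellNorm_dPart_eq hgen hμ (by omega) hi
    (by rw [hN, hx.cellNorm_matchMu hfac.1])
  have hc := coord_dPart_succ hp
  have hess := hx.essUpTo_matchMu h1 hfac h
  have hph : p ≠ height E η x := by
    rintro rfl
    exact hne (hx.dPart_matchMu hfac.1)
  have hple : p ≤ height E η x + 1 := by
    by_contra! hlt
    have hc' : ∀ i ≤ height E η x + 1,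
        coord (dPart (p + 1) (matchMu E η x)) i = coord (matchMu E η x) i := fun i hi => by
      rw [hc, if_pos (by omega)]
    refine hz.2 (collapsible_of_stable (p := height E η x) h1
      (by rw [length_dPart hi]; omega) (hess.congr fun i hi => hc' i hi.le) ?_).1
    rw [hc' _ le_rfl, hc' _ (by omega)]
    exact hx.stable_matchMu hfac.1
  have hcp : coord (dPart (p + 1) (matchMu E η x)) p =
      coord (matchMu E η x) (p + 1) * coord (matchMu E η x) p := by simp [hc]
  have hh : height E η (dPart (p + 1) (matchMu E η x)) = p := by
    refine height_eq_of_notMem h1 ((hess.mono hple).congr fun i hi => by rw [hc, if_pos hi]) ?_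
    rw [hcp]
    exact mul_notMem_of_geodesic hgen (hμne _ hp) (hμne _ (by omega)) hgeo
  have hz₁ := hz.coord_matchMu_height
  have hz₂ := hz.coord_matchMu_height_succ
  have hz₃ := hz.coord_matchMu
  rw [hh, hcp] at hz₁ hz₂ hz₃
  rw [hh]
  refine ⟨by omega, hgeo, by rw [hz₁, hz₂], fun i hi₁ hi₂ => ?_⟩
  rw [hz₃, if_neg hi₁, if_neg hi₂, hc, hc]
  split_ifs <;> first | rfl | (congr 1; omega)

/-- There is no infinite chain `x₀ ⊢ x₁ ⊢ ⋯` of redundant cells with distinct successive terms. -/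
theorem not_exists_strict_chain (h1 : (1 : M) ∉ E) (hgen : IsGenSet E) (hfac : IsFactorable E η)
    (x : ℕ → List M) (hx : ∀ t, (1 : M) ∉ x t ∧ Redundant E η (x t))
    (hstep : ∀ t, barDiff (matchMu E η (x t)) (x (t + 1)) ≠ 0) :
    ¬ ∀ t, x (t + 1) ≠ x t := by
  intro hne
  have hanti : Antitone fun t => cellNorm E (x t) := antitone_nat_of_succ_le fun t =>
    (hx t).2.cellNorm_le_of_barDiff_ne_zero hgen hfac.1 (hstep t)
  obtain ⟨n, hn⟩ := WellFoundedGT.monotone_chain_condition (α := ℕᵒᵈ) ⟨_, hanti.dual_right⟩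
  have hlen : ∀ t, (x (n + t)).length = (x n).length := fun t => by
    induction t with
    | zero => rfl
    | succ t ih => rw [← ih]; exact (hx _).2.length_eq_of_barDiff_ne_zero (hstep _)
  have hs := fun t => (hx (n + t)).2.step_of_cellNorm_eq h1 hgen hfac (hx (n + t)).1
    (hx (n + t + 1)).2 (hstep (n + t)) (hne (n + t))
    ((hn (n + t + 1) (by omega)).symm.trans (hn (n + t) (by omega)))
  refine not_bounded_of_larger_between (k := fun t => height E η (x (n + t)))
    (exists_larger_height_between hfac (Y := fun t => coord (matchMu E η (x (n + t))))
      (fun t => (hx _).2.stable_matchMu hfac.1) (fun t i hi => ?_) (fun t => (hs t).2.2.1)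
      (fun t => (hs t).2.2.2) (fun t => (hs t).1) (fun t => (hs t).2.1))
    (x n).length fun t => hlen t ▸ (hx (n + t)).2.1
  exact ((hx _).2.essUpTo_matchMu h1 hfac (hx _).1).2 i (by rw [hi]; omega)

theorem eventually_constant_of_chain (h1 : (1 : M) ∉ E) (hgen : IsGenSet E)
    (hfac : IsFactorable E η) (f : ℕ → List M) (hf : ∀ k, (1 : M) ∉ f k ∧ Redundant E η (f k))
    (hstep : ∀ k, barDiff (matchMu E η (f k)) (f (k + 1)) ≠ 0) :
    ∃ N, ∀ k, N ≤ k → f k = f N := by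
  let R : List M → List M → Prop := fun z x =>
    ((1 : M) ∉ x ∧ Redundant E η x) ∧ barDiff (matchMu E η x) z ≠ 0 ∧ z ≠ x
  have hR : WellFounded R := by
    rw [wellFounded_iff_isEmpty_descending_chain]
    exact ⟨fun ⟨x, hx⟩ => not_exists_strict_chain h1 hgen hfac x (fun t => (hx t).1)
      (fun t => (hx t).2.1) fun t => (hx t).2.2⟩
  obtain ⟨_, ⟨N, rfl⟩, hmin⟩ := hR.has_min (Set.range f) ⟨_, 0, rfl⟩
  refine ⟨N, fun k hk => ?_⟩
  induction k, hk using Nat.le_induction with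
  | base => rfl
  | succ k _ ih =>
    by_contra hne
    exact hmin _ ⟨k + 1, rfl⟩ (ih ▸ ⟨hf k, hstep k, ih.symm ▸ hne⟩)

end Noetherian

/-- Let `(M, E, η)` be a factorable monoid. Then the map `μ` defined from `η` is a
noetherian, `ℤ`-compatible matching on the reduced inhomogeneous bar complex of `M`:
(i) `μ` is a well-defined involution on cells whose fixed points are exactly the
essential cells, and it exchanges collapsible cells of height `h` with redundant cells
of height `h−1` (and vice versa); (ii) for every redundant cell `x`, the coefficient of
`x` in `d(μ(x))` is `±1`; (iii) every infinite chain `x₁ ⊢ x₂ ⊢ x₃ ⊢ ⋯` of redundant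
cells is eventually constant. -/
theorem matching_of_factorable
    {M : Type*} [Monoid M] (E : Set M) (h1 : (1 : M) ∉ E) (hgen : IsGenSet E)
    (η : M → M × M) (hfac : IsFactorable E η) :
    (∀ l : List M, (1 : M) ∉ l →
      (1 : M) ∉ matchMu E η l ∧ matchMu E η (matchMu E η l) = l) ∧
    (∀ l : List M, (1 : M) ∉ l → (matchMu E η l = l ↔ EssCell E η l)) ∧
    (∀ l : List M, (1 : M) ∉ l → Collapsible E η l →
      Redundant E η (matchMu E η l) ∧ (matchMu E η l).length + 1 = l.length ∧
      height E η (matchMu E η l) + 1 = height E η l) ∧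
    (∀ l : List M, (1 : M) ∉ l → Redundant E η l →
      Collapsible E η (matchMu E η l) ∧ (matchMu E η l).length = l.length + 1 ∧
      height E η (matchMu E η l) = height E η l + 1) ∧
    (∀ l : List M, (1 : M) ∉ l → Redundant E η l →
      barDiff (matchMu E η l) l = 1 ∨ barDiff (matchMu E η l) l = -1) ∧
    (∀ f : ℕ → List M, (∀ k, (1 : M) ∉ f k ∧ Redundant E η (f k)) →
      (∀ k, barDiff (matchMu E η (f k)) (f (k + 1)) ≠ 0) →
      ∃ N, ∀ k, N ≤ k → f k = f N) := by
  refine ⟨fun l h => matchMu_matchMu h1 hgen hfac h, fun l _ => matchMu_eq_self_iff h1,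
    fun l h hl => ?_, fun l h hl => ?_, fun l h hl => ?_,
    eventually_constant_of_chain h1 hgen hfac⟩
  · obtain ⟨h₁, h₂⟩ := hl.redundant_matchMu h1 hgen hfac h
    exact ⟨h₁, hl.length_matchMu, h₂⟩
  · obtain ⟨h₁, h₂⟩ := hl.collapsible_matchMu h1 hfac h
    exact ⟨h₁, hl.length_matchMu, h₂⟩
  · rw [hl.barDiff_matchMu h1 hgen hfac.1 h]
    exact neg_one_pow_eq_or ℤ _
end

section
/- Let M be a left locally Gaussian monoid and E ⊆ M∖{1} a generating set closed under llcm and left-complement. Let x ∈ M∖{1} with E-normal form of length p, and let a ∈ E. Then the E-normal form of x·a has length q with q = p or q = p+1. -/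
/-- `x` left-divides `y`: `y = x·z` for some `z`. -/
def LDvd {M : Type*} [Monoid M] (x y : M) : Prop := ∃ z, y = x * z

/-- `y` right-divides `x`: `x = z·y` for some `z`. -/
def RDvd {M : Type*} [Monoid M] (y x : M) : Prop := ∃ z, x = z * y

/-- `c` is a common left-multiple of `a` and `b`. -/
def IsCLM {M : Type*} [Monoid M] (a b c : M) : Prop := RDvd a c ∧ RDvd b c

/-- `c` is a least common left-multiple (llcm) of `a` and `b`: a common left-multiple
that right-divides every common left-multiple. -/
def IsLLCM {M : Type*} [Monoid M] (a b c : M) : Prop :=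
  IsCLM a b c ∧ ∀ d, IsCLM a b d → RDvd c d

/-- `M` is right-cancellative. -/
def RightCancellative (M : Type*) [Monoid M] : Prop :=
  ∀ a b c : M, a * c = b * c → a = b

/-- `M` is left-noetherian: there is no infinite strictly descending chain with respect
to proper left-divisibility. -/
def LeftNoetherian (M : Type*) [Monoid M] : Prop :=
  ¬ ∃ f : ℕ → M, ∀ k, LDvd (f (k + 1)) (f k) ∧ f (k + 1) ≠ f k

/-- `M` is left locally Gaussian: right-cancellative, left-noetherian, and any two
elements admitting a common left-multiple admit a least common left-multiple. -/
def LeftLocallyGaussian (M : Type*) [Monoid M] : Prop :=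
  RightCancellative M ∧ LeftNoetherian M ∧
  ∀ a b : M, (∃ c, IsCLM a b c) → ∃ c, IsLLCM a b c

/-- `E` is closed under least common left-multiples. -/
def ClosedLLCM {M : Type*} [Monoid M] (E : Set M) : Prop :=
  ∀ x ∈ E, ∀ y ∈ E, ∀ c, IsLLCM x y c → c ∈ E

/-- `E` is closed under left-complements: if `c = llcm(x,y)` and `c = w·y`, then the
left-complement `w = x/y` lies in `E ∪ {1}`. -/
def ClosedLComp {M : Type*} [Monoid M] (E : Set M) : Prop :=
  ∀ x ∈ E, ∀ y ∈ E, ∀ c w, IsLLCM x y c → c = w * y → (w ∈ E ∨ w = 1)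

/-- `x ⊲_E y`: every right-divisor of `x·y` lying in `E` right-divides `y`. -/
def Tri {M : Type*} [Monoid M] (E : Set M) (x y : M) : Prop :=
  ∀ d ∈ E, RDvd d (x * y) → RDvd d y

/-- The list `[x_p, …, x_1]` is an `E`-normal sequence: all entries lie in `E` and
`x_{i+1} ⊲_E x_i` for all `i`. -/
def ENormalSeq {M : Type*} [Monoid M] (E : Set M) (l : List M) : Prop :=
  (∀ a ∈ l, a ∈ E) ∧ l.Chain' (Tri E)

open scoped Pointwise

section GaussianMonoid

variable {M : Type*} [Monoid M] {E : Set M}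

lemma eq_one_of_mul_eq_one_left_of_leftLocallyGaussian (hM : LeftLocallyGaussian M) {s u : M}
    (h : s * u = 1) : s = 1 := by
  by_contra hs
  refine hM.2.1 ⟨fun k => if Even k then 1 else s, fun k => ?_⟩
  have hs1 : LDvd s 1 := ⟨u, h.symm⟩
  have h1s : LDvd 1 s := ⟨s, (one_mul s).symm⟩
  by_cases hk : Even k
  · simpa [hk, Nat.even_add_one, hs] using hs1
  · simpa [hk, Nat.even_add_one, Ne.symm hs] using h1s

/-- Two factorizations `s * u = t * v` with `u, v ∈ E ∪ {1}` both factor through the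
least common left-multiple of `u` and `v`, whose complements lie in `E ∪ {1}`. -/
lemma exists_complements (hM : LeftLocallyGaussian M) (hcc : ClosedLComp E)
    {s t u v : M} (hu : u ∈ insert 1 E) (hv : v ∈ insert 1 E) (h : s * u = t * v) :
    ∃ c, ∃ v' ∈ insert 1 E, ∃ u' ∈ insert 1 E,
      s = c * v' ∧ t = c * u' ∧ v' * u = u' * v := by
  rcases hu with rfl | hu
  · exact ⟨t, v, hv, 1, Set.mem_insert _ _, by simpa using h, by simp, by simp⟩
  rcases hv with rfl | hv
  · exact ⟨s, 1, Set.mem_insert _ _, u, Set.mem_insert_of_mem _ hu, by simp,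
      by simpa using h.symm, by simp⟩
  obtain ⟨d, hd⟩ := hM.2.2 u v ⟨s * u, ⟨s, rfl⟩, ⟨t, h⟩⟩
  obtain ⟨v', hv'⟩ := hd.1.1
  obtain ⟨u', hu'⟩ := hd.1.2
  obtain ⟨c, hc⟩ := hd.2 (s * u) ⟨⟨s, rfl⟩, ⟨t, h⟩⟩
  have hd' : IsLLCM v u d := ⟨hd.1.symm, fun e he => hd.2 e he.symm⟩
  refine ⟨c, v', (hcc v hv u hu d v' hd' hv').symm, u', (hcc u hu v hv d u' hd hu').symm,
    hM.1 _ _ u ?_, hM.1 _ _ v ?_, hv'.symm.trans hu'⟩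
  · rw [hc, hv', mul_assoc]
  · rw [← h, hc, hu', mul_assoc]

/-- If `s * u` is a product of `n` elements of `E ∪ {1}` and `u ∈ E ∪ {1}`,
then `s` is such a product as well. -/
lemma mem_pow_of_mul_mem_pow (hM : LeftLocallyGaussian M) (hcc : ClosedLComp E)
    {n : ℕ} {s u : M} (hu : u ∈ insert 1 E) (h : s * u ∈ (insert 1 E : Set M) ^ n) :
    s ∈ (insert 1 E : Set M) ^ n := by
  induction n generalizing s u with
  | zero =>
    rw [pow_zero, Set.mem_one] at h ⊢
    exact eq_one_of_mul_eq_one_left_of_leftLocallyGaussian hM h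
  | succ n ih =>
    rw [pow_succ] at h ⊢
    obtain ⟨t, ht, v, hv, htv⟩ := Set.mem_mul.1 h
    obtain ⟨c, v', hv', u', hu', rfl, rfl, -⟩ := exists_complements hM hcc hu hv htv.symm
    exact Set.mul_mem_mul (ih hu' ht) hv'

lemma prod_mem_insert_one_pow_length {l : List M} (hl : ∀ a ∈ l, a ∈ E) :
    l.prod ∈ (insert 1 E : Set M) ^ l.length := by
  induction l with
  | nil => simp
  | cons a l ih =>
    rw [List.prod_cons, List.length_cons, pow_succ']
    exact Set.mul_mem_mul (Set.mem_insert_of_mem _ (hl a List.mem_cons_self))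
      (ih fun b hb => hl b (List.mem_cons_of_mem _ hb))

lemma ENormalSeq.of_append_left {l m : List M} (h : ENormalSeq E (l ++ m)) : ENormalSeq E l :=
  ⟨fun a ha => h.1 a (List.mem_append_left _ ha), List.IsChain.left_of_append h.2⟩

/-- The last entry of an `E`-normal sequence is right-divisible by every right-divisor of the
product that lies in `E ∪ {1}`. -/
lemma ENormalSeq.rdvd_last (hM : LeftLocallyGaussian M) (hcc : ClosedLComp E)
    {l : List M} {b d : M} (hl : ENormalSeq E (l ++ [b])) (hd : d ∈ insert 1 E)
    (h : RDvd d (l.prod * b)) : RDvd d b := by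
  induction l using List.reverseRecOn generalizing b d with
  | nil => simpa using h
  | append_singleton l c ih =>
    rcases hd with rfl | hd
    · exact ⟨b, (mul_one b).symm⟩
    obtain ⟨s, hs⟩ := h
    obtain ⟨e, v, -, u, hu, -, he, huv⟩ := exists_complements hM hcc
      (Set.mem_insert_of_mem _ hd) (Set.mem_insert_of_mem _ (hl.1 b (by simp))) hs.symm
    obtain ⟨w, rfl⟩ := ih hl.of_append_left hu ⟨e, by simpa using he⟩
    have hchain : Tri E (w * u) b := by
      have := hl.2
      rw [List.append_assoc, List.singleton_append] at this
      exact (List.isChain_append_cons_cons.1 this).2.1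
    exact hchain d hd ⟨w * v, by rw [mul_assoc, ← huv, mul_assoc]⟩

lemma ENormalSeq.length_le (hM : LeftLocallyGaussian M) (h1 : (1 : M) ∉ E)
    (hcc : ClosedLComp E) {l : List M} {n : ℕ} (hl : ENormalSeq E l)
    (h : l.prod ∈ (insert 1 E : Set M) ^ n) : l.length ≤ n := by
  induction n generalizing l with
  | zero =>
    cases l with
    | nil => simp
    | cons b l =>
      rw [pow_zero, Set.mem_one, List.prod_cons] at h
      exact absurd (eq_one_of_mul_eq_one_left_of_leftLocallyGaussian hM h ▸
        hl.1 b List.mem_cons_self) h1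
  | succ n ih =>
    rcases List.eq_nil_or_concat l with rfl | ⟨l, b, rfl⟩
    · simp
    rw [List.concat_eq_append] at *
    rw [pow_succ] at h
    obtain ⟨t, ht, v, hv, htv⟩ := Set.mem_mul.1 h
    rw [List.prod_append, List.prod_singleton] at htv
    obtain ⟨u, hu⟩ := hl.rdvd_last hM hcc hv ⟨t, htv.symm⟩
    have hbE : b ∈ insert 1 E := Set.mem_insert_of_mem _ (hl.1 b (by simp))
    have huE : u ∈ insert 1 E := by
      simpa using mem_pow_of_mul_mem_pow (n := 1) hM hcc hv (by simpa [← hu] using hbE)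
    have ht' : t = l.prod * u := hM.1 _ _ v (by rw [htv, mul_assoc, ← hu])
    simpa using ih hl.of_append_left (mem_pow_of_mul_mem_pow hM hcc huE (ht' ▸ ht))

end GaussianMonoid

/-- Let `M` be a left locally Gaussian monoid and `E ⊆ M∖{1}` a generating set closed
under llcm and left-complement. If `x ≠ 1` has `E`-normal form of length `p` and
`a ∈ E`, then the `E`-normal form of `x·a` has length `p` or `p + 1`. -/
theorem length_normalForm_mul_generator
    {M : Type*} [Monoid M] (hM : LeftLocallyGaussian M)
    (E : Set M) (h1 : (1 : M) ∉ E) (hgen : IsGenSet E)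
    (hcl : ClosedLLCM E) (hcc : ClosedLComp E)
    (x : M) (hx : x ≠ 1) (l : List M) (hl : l ≠ [])
    (hnf : ENormalSeq E l) (hprod : l.prod = x)
    (a : M) (ha : a ∈ E)
    (m : List M) (hm : m ≠ [])
    (hnf' : ENormalSeq E m) (hprod' : m.prod = x * a) :
    m.length = l.length ∨ m.length = l.length + 1 := by
  have hinsert : a ∈ insert 1 E := Set.mem_insert_of_mem _ ha
  have hlower : l.length ≤ m.length := by
    refine hnf.length_le hM h1 hcc (mem_pow_of_mul_mem_pow hM hcc hinsert ?_)
    rw [hprod, ← hprod']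
    exact prod_mem_insert_one_pow_length hnf'.1
  have hupper : m.length ≤ l.length + 1 := by
    refine hnf'.length_le hM h1 hcc ?_
    rw [hprod', ← hprod, pow_succ]
    exact Set.mul_mem_mul (prod_mem_insert_one_pow_length hnf.1) hinsert
  omega
end
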